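/- For every integer n ≥ 3 there exists a connected combinatorial hypermap T with hyperedge set E(T) = {e₁, …, e_n} such that for every A ⊆ E(T): if e_n ∉ A and |A| ≤ n − 2 then ε(T^A) = 2|A|; if either (e_n ∈ A and |A| = 1) or (e_n ∉ A and |A| = n − 1) then ε(T^A) = 2n − 4; and if e_n ∈ A and 2 ≤ |A| ≤ n then ε(T^A) = 2n − 2|A|. -/

import Mathlib

open Classical

/-- A pre-hypermap on a set of flags `F`: three structure maps `θ₀, θ₁, θ₂`.
It is a genuine combinatorial hypermap when the three maps are
fixed-point-free involutions (see `PreHypermap.IsHypermap`). -/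
structure PreHypermap (F : Type*) where
  theta : Fin 3 → F → F

namespace PreHypermap

variable {F : Type*}

/-- `H` is a combinatorial hypermap: `θ₀, θ₁, θ₂` are fixed-point-free involutions. -/
def IsHypermap (H : PreHypermap F) : Prop :=
  ∀ i : Fin 3, Function.Involutive (H.theta i) ∧ ∀ x : F, H.theta i x ≠ x

/-- The equivalence relation on `F` generated by a set of functions `F → F`;
for a set of involutions, two flags are related iff they are in the same orbit
of the subgroup generated by those involutions. -/
def orbitRel (fs : Set (F → F)) : F → F → Prop :=
  Relation.EqvGen (fun x y => ∃ f ∈ fs, f x = y)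

/-- The setoid of orbits of the subgroup generated by a set of involutions. -/
def orbitSetoid (fs : Set (F → F)) : Setoid F :=
  Relation.EqvGen.setoid (fun x y => ∃ f ∈ fs, f x = y)

/-- The number of orbits on `F` of the subgroup generated by a set of involutions. -/
noncomputable def orbitCount (fs : Set (F → F)) : ℕ :=
  Nat.card (Quotient (orbitSetoid fs))

/-- `v H`: the number of vertices, i.e. orbits of `⟨θ₁, θ₂⟩`. -/
noncomputable def v (H : PreHypermap F) : ℕ := orbitCount {H.theta 1, H.theta 2}

/-- `e H`: the number of hyperedges, i.e. orbits of `⟨θ₀, θ₂⟩`. -/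
noncomputable def e (H : PreHypermap F) : ℕ := orbitCount {H.theta 0, H.theta 2}

/-- `f H`: the number of faces, i.e. orbits of `⟨θ₀, θ₁⟩`. -/
noncomputable def f (H : PreHypermap F) : ℕ := orbitCount {H.theta 0, H.theta 1}

/-- `c H`: the number of components, i.e. orbits of `⟨θ₀, θ₁, θ₂⟩`. -/
noncomputable def c (H : PreHypermap F) : ℕ :=
  orbitCount {H.theta 0, H.theta 1, H.theta 2}

/-- `H` is connected if it has exactly one component. -/
def Connected (H : PreHypermap F) : Prop := H.c = 1

/-- The Euler characteristic `χ(H) = v + e + f - |F|/2`. -/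
noncomputable def chi (H : PreHypermap F) : ℤ :=
  (H.v : ℤ) + (H.e : ℤ) + (H.f : ℤ) - (Nat.card F : ℤ) / 2

/-- The Euler genus `ε(H) = 2 c(H) - χ(H)`. -/
noncomputable def eulerGenus (H : PreHypermap F) : ℤ := 2 * (H.c : ℤ) - H.chi

/-- `H` is orientable: there is `o : F → {+1, -1}` with `o (θᵢ x) = - o x` for all `i, x`. -/
def Orientable (H : PreHypermap F) : Prop :=
  ∃ o : F → ℤ, (∀ x : F, o x = 1 ∨ o x = -1) ∧
    ∀ (i : Fin 3) (x : F), o (H.theta i x) = - o x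

/-- The set `E(H)` of hyperedges of `H`, each hyperedge being its set of flags
(an orbit of `⟨θ₀, θ₂⟩`). -/
def edges (H : PreHypermap F) : Set (Set F) :=
  {s : Set F | ∃ x : F, s = {y : F | orbitRel {H.theta 0, H.theta 2} x y}}

/-- The geometric dual `H* = (F, θ₂, θ₁, θ₀)`. -/
def dual (H : PreHypermap F) : PreHypermap F where
  theta := fun i => H.theta (2 - i)

/-- The partial dual of `H` with respect to a set `S` of flags (interchange `θ₀` and
`θ₂` on `S`); for `A ⊆ E(H)` the partial dual `H^A` is `H.pdual (⋃₀ A)`. -/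
noncomputable def pdual (H : PreHypermap F) (S : Set F) : PreHypermap F where
  theta := fun i x =>
    if i = 1 then H.theta 1 x
    else if x ∈ S then H.theta (2 - i) x else H.theta i x

/-- `f(A)` for `A ⊆ E(H)`: the number of orbits of `⟨θ₁, θ₂^A⟩` (which equals `v(H^A)`). -/
noncomputable def subf (H : PreHypermap F) (A : Set (Set F)) : ℕ :=
  (H.pdual (⋃₀ A)).v

/-- `c(A)` for `A ⊆ E(H)`: the number of orbits of the subgroup generated by `θ₁`, `θ₂`
and the permutation equal to `θ₀` on `S(A)` and the identity elsewhere. -/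
noncomputable def subc (H : PreHypermap F) (A : Set (Set F)) : ℕ :=
  orbitCount {H.theta 1, H.theta 2, fun x => if x ∈ ⋃₀ A then H.theta 0 x else x}

/-- `χ(A) = v(A) + e(A) + f(A) - |S(A)|/2` for `A ⊆ E(H)`, where `v(A) = v(H)`,
`e(A) = |A|`, `f(A) = v(H^A)` and `S(A) = ⋃₀ A`. -/
noncomputable def subchi (H : PreHypermap F) (A : Set (Set F)) : ℤ :=
  (H.v : ℤ) + (A.ncard : ℤ) + (H.subf A : ℤ) - ((⋃₀ A).ncard : ℤ) / 2

/-- `ε(A) = 2 c(A) - χ(A)` for `A ⊆ E(H)`. -/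
noncomputable def subeps (H : PreHypermap F) (A : Set (Set F)) : ℤ :=
  2 * (H.subc A : ℤ) - H.subchi A

/-- The hyperedge set of `H` as a finset. -/
noncomputable def edgeFinset (H : PreHypermap F) [Fintype F] : Finset (Set F) :=
  (Set.toFinite H.edges).toFinset

/-- The partial-dual Euler-genus polynomial `∂ε_H(z) = Σ_{A ⊆ E(H)} z^(ε(H^A))`. -/
noncomputable def pdPoly (H : PreHypermap F) [Fintype F] : Polynomial ℕ :=
  ∑ A ∈ H.edgeFinset.powerset,
    Polynomial.X ^ ((H.pdual (⋃₀ (A : Set (Set F)))).eulerGenus).toNat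

/-- The partial-dual orientable-genus polynomial `∂Γ_H(z) = Σ_{A ⊆ E(H)} z^(ε(H^A)/2)`. -/
noncomputable def pdGammaPoly (H : PreHypermap F) [Fintype F] : Polynomial ℕ :=
  ∑ A ∈ H.edgeFinset.powerset,
    Polynomial.X ^ (((H.pdual (⋃₀ (A : Set (Set F)))).eulerGenus) / 2).toNat

/-- The join `H₁ ∨ H₂` of two hypermaps on disjoint flag sets, joining the corner
`{x, θ₁ x}` of `H₁` to the corner `{y, θ₁′ y}` of `H₂`. -/
noncomputable def join {F₁ F₂ : Type*} (H₁ : PreHypermap F₁) (H₂ : PreHypermap F₂)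
    (x : F₁) (y : F₂) : PreHypermap (F₁ ⊕ F₂) where
  theta := fun i z =>
    if i = 1 then
      if z = Sum.inl x then Sum.inr y
      else if z = Sum.inr y then Sum.inl x
      else if z = Sum.inl (H₁.theta 1 x) then Sum.inr (H₂.theta 1 y)
      else if z = Sum.inr (H₂.theta 1 y) then Sum.inl (H₁.theta 1 x)
      else Sum.map (H₁.theta 1) (H₂.theta 1) z
    else Sum.map (H₁.theta i) (H₂.theta i) z

/-- The bar-amalgamation `H₁ ⊕ H₂` of two hypermaps on disjoint flag sets, with a new
connecting hyperedge `{p, q, p', q'} = Fin 4` meeting the corner `{x, θ₁ x}` of `H₁`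
and the corner `{y, θ₁′ y}` of `H₂`. -/
noncomputable def bar {F₁ F₂ : Type*} (H₁ : PreHypermap F₁) (H₂ : PreHypermap F₂)
    (x : F₁) (y : F₂) : PreHypermap ((F₁ ⊕ F₂) ⊕ Fin 4) where
  theta := fun i z =>
    if i = 0 then
      match z with
      | .inl (.inl a) => .inl (.inl (H₁.theta 0 a))
      | .inl (.inr b) => .inl (.inr (H₂.theta 0 b))
      | .inr k => .inr (Equiv.swap (0 : Fin 4) 2 (Equiv.swap (1 : Fin 4) 3 k))
    else if i = 2 then
      match z with
      | .inl (.inl a) => .inl (.inl (H₁.theta 2 a))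
      | .inl (.inr b) => .inl (.inr (H₂.theta 2 b))
      | .inr k => .inr (Equiv.swap (0 : Fin 4) 1 (Equiv.swap (2 : Fin 4) 3 k))
    else
      if z = .inl (.inl x) then .inr 0
      else if z = .inr 0 then .inl (.inl x)
      else if z = .inl (.inl (H₁.theta 1 x)) then .inr 1
      else if z = .inr 1 then .inl (.inl (H₁.theta 1 x))
      else if z = .inl (.inr y) then .inr 2
      else if z = .inr 2 then .inl (.inr y)
      else if z = .inl (.inr (H₂.theta 1 y)) then .inr 3
      else if z = .inr 3 then .inl (.inr (H₂.theta 1 y))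
      else
        match z with
        | .inl (.inl a) => .inl (.inl (H₁.theta 1 a))
        | .inl (.inr b) => .inl (.inr (H₂.theta 1 b))
        | .inr k => .inr k

end PreHypermap

/-!
Let the flags be two copies of a finite set of darts `D`, and let a permutation `σ` of `D` act as
the involution exchanging the flag `x` of one copy with the flag `σ x` of the other. The orbits
generated by two such involutions, for `σ` and `τ`, are the cycles of `τ⁻¹ σ`, so vertices and faces
of partial duals become cycles of explicit permutations of `D`.

The witness is a ring of `N = n - 1` triangular faces with sides `out, mid, inn`. The hyperedge
`e_{i+1}` glues `out` of triangle `i` to `inn` of triangle `i + 1`, and `e_n` passes through all the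
`mid` sides. Inserting glueing hyperedges one at a time merges triangles, except that the last one
closes the ring and splits a face; if `e_n` is present, all the sides lie on a single face and each
glueing hyperedge splits off a new one. As the vertices of `T^A` are the faces of the partial dual
with respect to the complement of `A`, these two counts determine `ε(T^A)`.
-/

namespace PreHypermap

section Orbits

variable {F G I : Type*} {fs : Set (F → F)} {gs : Set (G → G)} {x y z : F}

lemma orbitRel.refl (x : F) : orbitRel fs x x := Relation.EqvGen.refl x

lemma orbitRel.symm (h : orbitRel fs x y) : orbitRel fs y x := Relation.EqvGen.symm _ _ h

lemma orbitRel.trans (hxy : orbitRel fs x y) (hyz : orbitRel fs y z) : orbitRel fs x z :=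
  Relation.EqvGen.trans _ _ _ hxy hyz

lemma orbitRel_apply {f : F → F} (hf : f ∈ fs) (x : F) : orbitRel fs x (f x) :=
  Relation.EqvGen.rel _ _ ⟨f, hf, rfl⟩

lemma orbitRel_singleton_apply (f : F → F) (x : F) : orbitRel {f} x (f x) :=
  orbitRel_apply (Set.mem_singleton f) x

lemma orbitRel.setoid_rel (s : Setoid F) (hs : ∀ f ∈ fs, ∀ x, s x (f x)) (h : orbitRel fs x y) :
    s x y :=
  Setoid.eqvGen_le (by rintro x _ ⟨f, hf, rfl⟩; exact hs f hf x) h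

lemma orbitRel.map (g : F → G) (hg : ∀ f ∈ fs, ∀ x, orbitRel gs (g x) (g (f x)))
    (h : orbitRel fs x y) : orbitRel gs (g x) (g y) :=
  h.setoid_rel ((orbitSetoid gs).comap g) hg

lemma orbitRel_iff_of_representatives {g : F → I} (rep : I → F)
    (hinv : ∀ f ∈ fs, ∀ x, g (f x) = g x) (hrep : ∀ x, orbitRel fs x (rep (g x))) :
    orbitRel fs x y ↔ g x = g y := by
  refine ⟨fun h => h.setoid_rel (Setoid.ker g) fun f hf x => (hinv f hf x).symm, fun h => ?_⟩
  exact (hrep x).trans (h ▸ (hrep y).symm)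

lemma orbitCount_eq_card {g : F → I} (hg : Function.Surjective g)
    (h : ∀ x y, orbitRel fs x y ↔ g x = g y) : orbitCount fs = Nat.card I := by
  have hker : orbitSetoid fs = Setoid.ker g := Setoid.ext h
  rw [orbitCount, hker]
  exact Nat.card_congr (Setoid.quotientKerEquivOfSurjective g hg)

lemma orbitCount_eq_card_of_representatives {g : F → I} (rep : I → F)
    (hgrep : Function.LeftInverse g rep) (hinv : ∀ f ∈ fs, ∀ x, g (f x) = g x)
    (hrep : ∀ x, orbitRel fs x (rep (g x))) : orbitCount fs = Nat.card I :=
  orbitCount_eq_card hgrep.surjective fun _ _ => orbitRel_iff_of_representatives rep hinv hrep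

lemma orbitCount_eq_orbitCount {g : F → G} (hg : Function.Surjective g)
    (h : ∀ x y, orbitRel fs x y ↔ orbitRel gs (g x) (g y)) : orbitCount fs = orbitCount gs :=
  orbitCount_eq_card (g := fun x => (⟦g x⟧ : Quotient (orbitSetoid gs)))
    (Quotient.mk_surjective.comp hg) fun x y =>
      (h x y).trans (Quotient.eq (r := orbitSetoid gs)).symm

lemma orbitCount_congr {fs₂ : Set (F → F)}
    (h : ∀ x y, (∃ f ∈ fs, f x = y) ↔ ∃ f ∈ fs₂, f x = y) : orbitCount fs = orbitCount fs₂ := by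
  simp only [orbitCount, orbitSetoid, h]

lemma orbitRel_of_forall_add_one {N : ℕ} (p : ZMod N → F)
    (hp : ∀ i, orbitRel fs (p i) (p (i + 1))) (i j : ZMod N) : orbitRel fs (p i) (p j) := by
  have from_zero (k : ℤ) : orbitRel fs (p 0) (p k) := by
    induction k with
    | zero => simpa using orbitRel.refl (p 0)
    | succ k ih => simpa using ih.trans (hp _)
    | pred k ih => exact ih.trans (by simpa using (hp ((-(k : ℤ) - 1 : ℤ) : ZMod N)).symm)
  obtain ⟨k, rfl⟩ := ZMod.intCast_surjective i
  obtain ⟨l, rfl⟩ := ZMod.intCast_surjective j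
  exact (from_zero k).symm.trans (from_zero l)

end Orbits

section PartialDual

variable {F : Type*} (H : PreHypermap F) (S : Set F)

lemma pdual_theta_zero :
    (H.pdual S).theta 0 = fun x => if x ∈ S then H.theta 2 x else H.theta 0 x := rfl

lemma pdual_theta_one : (H.pdual S).theta 1 = H.theta 1 := rfl

lemma pdual_theta_two :
    (H.pdual S).theta 2 = fun x => if x ∈ S then H.theta 0 x else H.theta 2 x := rfl

lemma pdual_compl_theta_two : (H.pdual Sᶜ).theta 2 = (H.pdual S).theta 0 := by
  funext x
  by_cases hx : x ∈ S <;> simp [pdual_theta_zero, pdual_theta_two, hx]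

lemma c_pdual : (H.pdual S).c = H.c := by
  refine orbitCount_congr fun x y => ?_
  by_cases hx : x ∈ S <;>
    simp [pdual_theta_zero, pdual_theta_one, pdual_theta_two, hx, or_comm, or_left_comm]

lemma e_pdual : (H.pdual S).e = H.e := by
  refine orbitCount_congr fun x y => ?_
  by_cases hx : x ∈ S <;> simp [pdual_theta_zero, pdual_theta_two, hx, or_comm]

lemma v_pdual_compl : (H.pdual Sᶜ).v = (H.pdual S).f := by
  rw [v, f, pdual_compl_theta_two, pdual_theta_one, pdual_theta_one, Set.pair_comm]

lemma v_pdual : (H.pdual S).v = (H.pdual Sᶜ).f := by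
  rw [← v_pdual_compl, compl_compl]

lemma eulerGenus_pdual_compl : (H.pdual Sᶜ).eulerGenus = (H.pdual S).eulerGenus := by
  simp only [eulerGenus, chi, c_pdual, e_pdual, v_pdual_compl, v_pdual H S]
  ring

end PartialDual

section Crossing

variable {D : Type*}

/-- The involution of two copies of `D` exchanging `x` in the copy `true` with `σ x` in the copy
`false`; an orientable hypermap is given by three of these. -/
def crossing (σ : Equiv.Perm D) : D × Bool → D × Bool
  | (x, true) => (σ x, false)
  | (x, false) => (σ.symm x, true)

lemma crossing_involutive (σ : Equiv.Perm D) : Function.Involutive (crossing σ) := by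
  rintro ⟨x, _ | _⟩ <;> simp [crossing]

lemma crossing_ne (σ : Equiv.Perm D) (p : D × Bool) : crossing σ p ≠ p := by
  obtain ⟨x, _ | _⟩ := p <;> simp [crossing]

/-- The dart in the copy `true` representing the `crossing τ`-orbit of a flag. -/
def trueDart (τ : Equiv.Perm D) : D × Bool → D
  | (x, true) => x
  | (x, false) => τ.symm x

lemma trueDart_surjective (τ : Equiv.Perm D) : Function.Surjective (trueDart τ) :=
  fun x => ⟨(x, true), rfl⟩

lemma orbitRel_trueDart_crossing {S : Set (Equiv.Perm D)} {σ τ : Equiv.Perm D}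
    (hσ : σ ∈ insert τ S) (p : D × Bool) :
    orbitRel ((fun σ => ⇑(τ⁻¹ * σ)) '' S) (trueDart τ p) (trueDart τ (crossing σ p)) := by
  rcases hσ with rfl | hσ
  · obtain ⟨x, _ | _⟩ := p <;> simpa [crossing, trueDart] using orbitRel.refl _
  · have step := orbitRel_apply (Set.mem_image_of_mem (fun σ => ⇑(τ⁻¹ * σ)) hσ)
    obtain ⟨x, _ | _⟩ := p
    · simpa [crossing, trueDart] using (step (σ.symm x)).symm
    · exact step x

lemma orbitRel_crossing_trueDart (S : Set (Equiv.Perm D)) (τ : Equiv.Perm D) (p : D × Bool) :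
    orbitRel (crossing '' insert τ S) p (trueDart τ p, true) := by
  obtain ⟨x, _ | _⟩ := p
  · exact orbitRel_apply (Set.mem_image_of_mem _ (Set.mem_insert τ S)) _
  · exact orbitRel.refl _

lemma orbitRel_crossing_mul {S : Set (Equiv.Perm D)} {σ : Equiv.Perm D} (τ : Equiv.Perm D)
    (hσ : σ ∈ S) (x : D) :
    orbitRel (crossing '' insert τ S) (x, true) ((τ⁻¹ * σ) x, true) :=
  (orbitRel_apply (Set.mem_image_of_mem _ (Set.mem_insert_of_mem τ hσ)) (x, true)).trans
    (orbitRel_crossing_trueDart S τ (σ x, false))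

lemma orbitRel_crossing_iff (τ : Equiv.Perm D) (S : Set (Equiv.Perm D)) (p q : D × Bool) :
    orbitRel (crossing '' insert τ S) p q ↔
      orbitRel ((fun σ => ⇑(τ⁻¹ * σ)) '' S) (trueDart τ p) (trueDart τ q) := by
  constructor
  · refine orbitRel.map _ ?_
    rintro _ ⟨σ, hσ, rfl⟩
    exact orbitRel_trueDart_crossing hσ
  · intro h
    have hcopy : orbitRel (crossing '' insert τ S) (trueDart τ p, true) (trueDart τ q, true) := by
      refine h.map (·, true) ?_
      rintro _ ⟨σ, hσ, rfl⟩
      exact orbitRel_crossing_mul τ hσ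
    exact ((orbitRel_crossing_trueDart S τ p).trans hcopy).trans
      (orbitRel_crossing_trueDart S τ q).symm

lemma orbitCount_crossing (τ : Equiv.Perm D) (S : Set (Equiv.Perm D)) :
    orbitCount (crossing '' insert τ S) = orbitCount ((fun σ => ⇑(τ⁻¹ * σ)) '' S) :=
  orbitCount_eq_orbitCount (trueDart_surjective τ) (orbitRel_crossing_iff τ S)

/-- The orientable hypermap whose faces and hyperedges correspond to the cycles of the permutations
`ν` and `ε` of the darts `D`; its flags are two copies of `D`. -/
def ofPerms (ν ε : Equiv.Perm D) : PreHypermap (D × Bool) where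
  theta := ![crossing 1, crossing ν⁻¹, crossing ε]

variable (ν ε : Equiv.Perm D)

lemma isHypermap_ofPerms : (ofPerms ν ε).IsHypermap := by
  intro i
  fin_cases i <;> exact ⟨crossing_involutive _, crossing_ne _⟩

lemma c_ofPerms : (ofPerms ν ε).c = orbitCount {⇑ν, ⇑(ν * ε)} := by
  have hset : ({crossing 1, crossing ν⁻¹, crossing ε} : Set (D × Bool → D × Bool)) =
      crossing '' insert ν⁻¹ {1, ε} := by
    simp only [Set.image_insert_eq, Set.image_singleton, Set.insert_comm]
  refine (congrArg orbitCount hset).trans ?_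
  rw [orbitCount_crossing, Set.image_insert_eq, Set.image_singleton, inv_inv, mul_one]

lemma orbitRel_ofPerms_edge_iff (p q : D × Bool) :
    orbitRel {(ofPerms ν ε).theta 0, (ofPerms ν ε).theta 2} p q ↔ orbitRel {⇑ε} p.1 q.1 := by
  have hset : ({(ofPerms ν ε).theta 0, (ofPerms ν ε).theta 2} : Set (D × Bool → D × Bool)) =
      crossing '' insert 1 {ε} := by
    simp [ofPerms, Set.image_insert_eq]
  have hfst : trueDart (1 : Equiv.Perm D) = Prod.fst := by
    funext ⟨x, s⟩
    cases s <;> rfl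
  simp [hset, orbitRel_crossing_iff, hfst]

lemma pdual_ofPerms_theta_zero {S : Set D} (hS : ∀ x, ε x ∈ S ↔ x ∈ S) :
    ((ofPerms ν ε).pdual (Prod.fst ⁻¹' S)).theta 0 =
      crossing (Equiv.Perm.ofSubtype (ε.subtypePerm hS)) := by
  funext ⟨x, s⟩
  by_cases hx : x ∈ S
  · have hpre : ε.symm x ∈ S := by rwa [← hS, ε.apply_symm_apply]
    cases s
    · have hsymm : (Equiv.Perm.ofSubtype (ε.subtypePerm hS)).symm x = ε.symm x := by
        rw [Equiv.symm_apply_eq, Equiv.Perm.ofSubtype_apply_of_mem _ hpre]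
        simp
      simp [pdual_theta_zero, ofPerms, crossing, hx, hsymm]
    · simp [pdual_theta_zero, ofPerms, crossing, hx, Equiv.Perm.ofSubtype_apply_of_mem _ hx]
  · have hfix := Equiv.Perm.ofSubtype_apply_of_not_mem (ε.subtypePerm hS) hx
    cases s
    · have hsymm : (Equiv.Perm.ofSubtype (ε.subtypePerm hS)).symm x = x := by
        rw [Equiv.symm_apply_eq, hfix]
      simp [pdual_theta_zero, ofPerms, crossing, hx, hsymm, Equiv.symm_apply_eq]
    · simp [pdual_theta_zero, ofPerms, crossing, hx, hfix]

lemma f_pdual_ofPerms {S : Set D} (hS : ∀ x, ε x ∈ S ↔ x ∈ S) :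
    ((ofPerms ν ε).pdual (Prod.fst ⁻¹' S)).f =
      orbitCount {fun x => ν (if x ∈ S then ε x else x)} := by
  set ρ := Equiv.Perm.ofSubtype (ε.subtypePerm hS)
  have hset : ({crossing ρ, crossing ν⁻¹} : Set (D × Bool → D × Bool)) =
      crossing '' insert ν⁻¹ {ρ} := by
    rw [Set.image_insert_eq, Set.image_singleton, Set.pair_comm]
  have hρ : ⇑(ν * ρ) = fun x => ν (if x ∈ S then ε x else x) := by
    funext x
    by_cases hx : x ∈ S
    · simp [ρ, hx, Equiv.Perm.ofSubtype_apply_of_mem _ hx]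
    · simp [ρ, hx, Equiv.Perm.ofSubtype_apply_of_not_mem _ hx]
  have hθ : (ofPerms ν ε).theta 1 = crossing ν⁻¹ := rfl
  rw [f, pdual_ofPerms_theta_zero ν ε hS, pdual_theta_one, hθ, hset, orbitCount_crossing,
    Set.image_singleton, inv_inv, hρ]

end Crossing

end PreHypermap

namespace TriangleRing

open PreHypermap

/-- The sides of a triangle of the ring, in the cyclic order `out → mid → inn → out`. -/
inductive Side
  | out
  | mid
  | inn
deriving DecidableEq

instance : Fintype Side := ⟨{.out, .mid, .inn}, by rintro (_ | _ | _) <;> simp⟩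

/-- The darts of the ring: the sides of `N` cyclically arranged triangles. -/
abbrev Dart (N : ℕ) : Type := ZMod N × Side

variable {N : ℕ}

/-- The permutation of the darts whose cycles are the triangles. -/
def rotate : Equiv.Perm (Dart N) where
  toFun
    | (i, .out) => (i, .mid)
    | (i, .mid) => (i, .inn)
    | (i, .inn) => (i, .out)
  invFun
    | (i, .out) => (i, .inn)
    | (i, .mid) => (i, .out)
    | (i, .inn) => (i, .mid)
  left_inv := by rintro ⟨i, _ | _ | _⟩ <;> rfl
  right_inv := by rintro ⟨i, _ | _ | _⟩ <;> rfl

/-- The permutation of the darts whose cycles are the hyperedges: `N` transpositions glueing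
consecutive triangles, and the cycle through all the sides `mid`. -/
def glue : Equiv.Perm (Dart N) where
  toFun
    | (i, .out) => (i + 1, .inn)
    | (i, .mid) => (i + 1, .mid)
    | (i, .inn) => (i - 1, .out)
  invFun
    | (i, .out) => (i + 1, .inn)
    | (i, .mid) => (i - 1, .mid)
    | (i, .inn) => (i - 1, .out)
  left_inv := by rintro ⟨i, _ | _ | _⟩ <;> simp
  right_inv := by rintro ⟨i, _ | _ | _⟩ <;> simp

/-- The hyperedge of a dart: `some i` glues the triangles `i` and `i + 1`, and `none` is the
hyperedge through the sides `mid`. -/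
def label : Dart N → Option (ZMod N)
  | (i, .out) => some i
  | (_, .mid) => none
  | (i, .inn) => some (i - 1)

/-- A dart of each hyperedge. -/
def edgeDart : Option (ZMod N) → Dart N
  | some i => (i, .out)
  | none => (0, .mid)

lemma label_glue (x : Dart N) : label (glue x) = label x := by
  obtain ⟨i, _ | _ | _⟩ := x <;> simp [glue, label]

lemma leftInverse_label_edgeDart : Function.LeftInverse (label (N := N)) edgeDart := by
  rintro (_ | i) <;> rfl

lemma orbitRel_glue_edgeDart (x : Dart N) : orbitRel {⇑glue} x (edgeDart (label x)) := by
  have step := orbitRel_singleton_apply (F := Dart N) glue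
  obtain ⟨i, _ | _ | _⟩ := x
  · exact orbitRel.refl _
  · exact orbitRel_of_forall_add_one (·, Side.mid) (fun j => step (j, .mid)) i 0
  · exact step (i, .inn)

lemma orbitRel_glue_iff (x y : Dart N) : orbitRel {⇑glue} x y ↔ label x = label y :=
  orbitRel_iff_of_representatives edgeDart (by rintro _ rfl; exact label_glue)
    orbitRel_glue_edgeDart

/-- The hypermap formed by the ring of `N` triangles. -/
def hypermap (N : ℕ) : PreHypermap (Dart N × Bool) := ofPerms rotate glue

/-- The flags of the hyperedge with a given label. -/
def edge (o : Option (ZMod N)) : Set (Dart N × Bool) := {p | label p.1 = o}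

lemma label_fst_surjective : Function.Surjective fun p : Dart N × Bool => label p.1 :=
  leftInverse_label_edgeDart.surjective.comp Prod.fst_surjective

lemma orbitRel_hypermap_edge_iff (p q : Dart N × Bool) :
    orbitRel {(hypermap N).theta 0, (hypermap N).theta 2} p q ↔ label p.1 = label q.1 :=
  (orbitRel_ofPerms_edge_iff rotate glue p q).trans (orbitRel_glue_iff p.1 q.1)

lemma e_hypermap [NeZero N] : (hypermap N).e = N + 1 := by
  have h := orbitCount_eq_card label_fst_surjective (orbitRel_hypermap_edge_iff (N := N))
  simpa [e] using h

lemma edge_injective : Function.Injective (edge (N := N)) :=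
  (Set.preimage_injective.2 label_fst_surjective).comp Set.singleton_injective

lemma edges_hypermap : (hypermap N).edges = Set.range edge := by
  have horbit (p : Dart N × Bool) :
      {q | orbitRel {(hypermap N).theta 0, (hypermap N).theta 2} p q} = edge (label p.1) := by
    ext q
    exact (orbitRel_hypermap_edge_iff p q).trans eq_comm
  simp only [edges, horbit]
  rw [← label_fst_surjective.range_comp edge]
  ext s
  simp [eq_comm]

lemma sUnion_edge_image (L : Set (Option (ZMod N))) :
    ⋃₀ (edge '' L) = Prod.fst ⁻¹' (label ⁻¹' L) := by
  ext p
  simp [edge]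

lemma orbitRel_rotate_glue (x : Dart N) :
    orbitRel {⇑rotate, ⇑(rotate * glue : Equiv.Perm (Dart N))} x (0, .inn) := by
  set fs : Set (Dart N → Dart N) := {⇑rotate, ⇑(rotate * glue : Equiv.Perm (Dart N))}
  have hrotate (y : Dart N) : orbitRel fs y (rotate y) := orbitRel_apply (by simp [fs]) y
  have hmid (i : ZMod N) : orbitRel fs (i, .mid) (i + 1, .inn) :=
    orbitRel_apply (fs := fs) (Set.mem_insert_of_mem _ (Set.mem_singleton _)) (i, Side.mid)
  have hinn (i : ZMod N) : orbitRel fs (i, .inn) (0, .inn) :=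
    orbitRel_of_forall_add_one (·, Side.inn)
      (fun j => (hrotate (j, .mid)).symm.trans (hmid j)) i 0
  obtain ⟨i, _ | _ | _⟩ := x
  · exact (hrotate (i, .inn)).symm.trans (hinn i)
  · exact (hrotate (i, .mid)).trans (hinn i)
  · exact hinn i

lemma connected_hypermap : (hypermap N).Connected := by
  rw [Connected, hypermap, c_ofPerms, orbitCount_eq_card_of_representatives (I := Unit)
    (g := fun _ => ()) (fun _ => (0, .inn)) (fun _ => rfl) (fun _ _ _ => rfl)
    orbitRel_rotate_glue, Nat.card_unique]

/-- The map on darts whose cycles are the faces of the partial dual with respect to the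
hyperedges labelled by `L`. -/
noncomputable def faceWalk (L : Set (Option (ZMod N))) (x : Dart N) : Dart N :=
  rotate (if label x ∈ L then glue x else x)

lemma f_pdual_hypermap (L : Set (Option (ZMod N))) :
    ((hypermap N).pdual (⋃₀ (edge '' L))).f = orbitCount {faceWalk L} := by
  rw [sUnion_edge_image]
  exact f_pdual_ofPerms rotate glue fun x => by
    rw [Set.mem_preimage, Set.mem_preimage, label_glue]

lemma sUnion_edge_image_compl (L : Set (Option (ZMod N))) :
    ⋃₀ (edge '' Lᶜ) = (⋃₀ (edge '' L))ᶜ := by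
  simp only [sUnion_edge_image, Set.preimage_compl]

lemma eulerGenus_pdual_hypermap [NeZero N] (L : Set (Option (ZMod N))) :
    ((hypermap N).pdual (⋃₀ (edge '' L))).eulerGenus =
      2 * N + 1 - orbitCount {faceWalk L} - orbitCount {faceWalk Lᶜ} := by
  have hcard : Nat.card (Dart N × Bool) = 6 * N := by
    have hside : Fintype.card Side = 3 := rfl
    simp only [Nat.card_eq_fintype_card, Fintype.card_prod, ZMod.card, hside, Fintype.card_bool]
    ring
  have hc : (hypermap N).c = 1 := connected_hypermap
  rw [eulerGenus, chi, c_pdual, e_pdual, v_pdual, ← sUnion_edge_image_compl, f_pdual_hypermap,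
    f_pdual_hypermap, hc, e_hypermap, hcard]
  push_cast
  omega

section FaceWalk

variable {L : Set (Option (ZMod N))} {i : ZMod N}

lemma faceWalk_out_of_mem (hi : some i ∈ L) : faceWalk L (i, .out) = (i + 1, .out) := by
  simp [faceWalk, label, glue, rotate, hi]

lemma faceWalk_out_of_notMem (hi : some i ∉ L) : faceWalk L (i, .out) = (i, .mid) := by
  simp [faceWalk, label, rotate, hi]

lemma faceWalk_mid_of_mem (hL : none ∈ L) : faceWalk L (i, .mid) = (i + 1, .inn) := by
  simp [faceWalk, label, glue, rotate, hL]

lemma faceWalk_mid_of_notMem (hL : none ∉ L) : faceWalk L (i, .mid) = (i, .inn) := by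
  simp [faceWalk, label, rotate, hL]

lemma faceWalk_inn_of_mem (hi : some (i - 1) ∈ L) : faceWalk L (i, .inn) = (i - 1, .mid) := by
  simp [faceWalk, label, glue, rotate, hi]

lemma faceWalk_inn_of_notMem (hi : some (i - 1) ∉ L) : faceWalk L (i, .inn) = (i, .out) := by
  simp [faceWalk, label, rotate, hi]

lemma orbitRel_faceWalk (L : Set (Option (ZMod N))) {x y : Dart N} (h : faceWalk L x = y) :
    orbitRel {faceWalk L} x y :=
  h ▸ orbitRel_singleton_apply _ x

end FaceWalk

section MidMem

variable {L : Set (Option (ZMod N))}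

/-- When `none ∈ L`, the faces are indexed by `L`: `some i` indexes the face with sides `(i, mid)`
and `(i + 1, inn)`, and `none` the face through all the other darts. -/
noncomputable def faceIndex (hL : none ∈ L) : Dart N → L
  | (_, .out) => ⟨none, hL⟩
  | (i, .mid) => if hi : some i ∈ L then ⟨some i, hi⟩ else ⟨none, hL⟩
  | (i, .inn) => if hi : some (i - 1) ∈ L then ⟨some (i - 1), hi⟩ else ⟨none, hL⟩

/-- A dart of each face when `none ∈ L`. -/
def faceDart : Option (ZMod N) → Dart N
  | none => (0, .out)
  | some i => (i, .mid)

lemma faceIndex_faceDart (hL : none ∈ L) (o : L) : faceIndex hL (faceDart o) = o := by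
  obtain ⟨_ | i, ho⟩ := o
  · rfl
  · simp [faceDart, faceIndex, ho]

lemma faceIndex_faceWalk (hL : none ∈ L) (x : Dart N) :
    faceIndex hL (faceWalk L x) = faceIndex hL x := by
  obtain ⟨i, _ | _ | _⟩ := x
  · by_cases hi : some i ∈ L
    · rw [faceWalk_out_of_mem hi]; rfl
    · simp [faceWalk_out_of_notMem hi, faceIndex, hi]
  · simp [faceWalk_mid_of_mem hL, faceIndex]
  · by_cases hi : some (i - 1) ∈ L
    · simp [faceWalk_inn_of_mem hi, faceIndex, hi]
    · simp [faceWalk_inn_of_notMem hi, faceIndex, hi]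

lemma orbitRel_faceWalk_mid_inn (hL : none ∈ L) (i : ZMod N) :
    orbitRel {faceWalk L} (i - 1, .mid) (i, .inn) :=
  orbitRel_faceWalk L (by simp [faceWalk_mid_of_mem hL])

lemma orbitRel_faceWalk_out (hL : none ∈ L) (i j : ZMod N) :
    orbitRel {faceWalk L} (i, .out) (j, .out) := by
  refine orbitRel_of_forall_add_one (·, Side.out) (fun i => ?_) i j
  by_cases hi : some i ∈ L
  · exact orbitRel_faceWalk L (faceWalk_out_of_mem hi)
  · have out_mid := orbitRel_faceWalk L (faceWalk_out_of_notMem hi)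
    have mid_inn := orbitRel_faceWalk L (faceWalk_mid_of_mem (i := i) hL)
    have inn_out := orbitRel_faceWalk L (faceWalk_inn_of_notMem (i := i + 1) (by simpa using hi))
    exact (out_mid.trans mid_inn).trans inn_out

lemma orbitRel_mid_faceDart (hL : none ∈ L) (i : ZMod N) :
    orbitRel {faceWalk L} (i, .mid) (faceDart (faceIndex hL (i, .mid))) := by
  by_cases hi : some i ∈ L
  · simpa [faceIndex, faceDart, hi] using orbitRel.refl _
  · simpa [faceIndex, faceDart, hi] using
      (orbitRel_faceWalk L (faceWalk_out_of_notMem hi)).symm.trans (orbitRel_faceWalk_out hL i 0)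

lemma orbitRel_faceDart (hL : none ∈ L) (x : Dart N) :
    orbitRel {faceWalk L} x (faceDart (faceIndex hL x)) := by
  obtain ⟨i, _ | _ | _⟩ := x
  · exact orbitRel_faceWalk_out hL i 0
  · exact orbitRel_mid_faceDart hL i
  · exact (orbitRel_faceWalk_mid_inn hL i).symm.trans (orbitRel_mid_faceDart hL (i - 1))

lemma orbitCount_faceWalk_of_none_mem (hL : none ∈ L) : orbitCount {faceWalk L} = L.ncard :=
  orbitCount_eq_card_of_representatives (fun o : L => faceDart o) (faceIndex_faceDart hL)
    (by rintro _ rfl; exact faceIndex_faceWalk hL) (orbitRel_faceDart hL)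

end MidMem

section Advance

variable {B : Set (ZMod N)} {i : ZMod N}

/-- Move one step forward as long as the current position is in `B`. -/
noncomputable def advance (B : Set (ZMod N)) (i : ZMod N) : ZMod N := if i ∈ B then i + 1 else i

lemma advance_of_mem (hi : i ∈ B) : advance B i = i + 1 := if_pos hi

lemma advance_of_notMem (hi : i ∉ B) : advance B i = i := if_neg hi

lemma iterate_advance_mem {k : ℕ} (hk : (advance B)^[k] i ∈ B) :
    (advance B)^[k] i = i + k ∧ ∀ j ≤ k, i + (j : ZMod N) ∈ B := by
  induction k with
  | zero => simpa using hk
  | succ k ih =>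
    rw [Function.iterate_succ_apply'] at hk ⊢
    by_cases hmem : (advance B)^[k] i ∈ B
    · obtain ⟨heq, hall⟩ := ih hmem
      have hsucc : advance B ((advance B)^[k] i) = i + (k + 1 : ℕ) := by
        rw [advance_of_mem hmem, heq, Nat.cast_succ, add_assoc]
      refine ⟨hsucc, fun j hj => ?_⟩
      rcases Nat.le_succ_iff.1 hj with hj | rfl
      · exact hall j hj
      · exact hsucc ▸ hk
    · rw [advance_of_notMem hmem] at hk
      exact absurd hk hmem

/-- The first position outside `B` at or after `i`, provided that `B` is not everything: it is
reached within `N` steps. -/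
noncomputable def escape (B : Set (ZMod N)) : ZMod N → ZMod N := (advance B)^[N]

lemma escape_notMem [NeZero N] (hB : B ≠ Set.univ) (i : ZMod N) : escape B i ∉ B := by
  intro hmem
  refine hB (Set.eq_univ_of_forall fun j => ?_)
  have hj := (iterate_advance_mem hmem).2 (j - i).val (ZMod.val_lt _).le
  rwa [ZMod.natCast_zmod_val, add_sub_cancel] at hj

lemma escape_of_notMem (hi : i ∉ B) : escape B i = i :=
  Function.iterate_fixed (advance_of_notMem hi) N

lemma escape_add_one_of_mem [NeZero N] (hB : B ≠ Set.univ) (hi : i ∈ B) :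
    escape B (i + 1) = escape B i :=
  calc escape B (i + 1) = (advance B)^[N] (advance B i) := by rw [advance_of_mem hi, escape]
    _ = advance B (escape B i) := by
      rw [← Function.iterate_succ_apply, Function.iterate_succ_apply', escape]
    _ = escape B i := advance_of_notMem (escape_notMem hB i)

lemma orbitRel_escape {F : Type*} {fs : Set (F → F)} (p : ZMod N → F)
    (hp : ∀ i ∈ B, orbitRel fs (p i) (p (i + 1))) (i : ZMod N) :
    orbitRel fs (p i) (p (escape B i)) := by
  have hadvance (j : ZMod N) : orbitRel fs (p j) (p (advance B j)) := by
    by_cases hj : j ∈ B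
    · simpa [advance_of_mem hj] using hp j hj
    · simpa [advance_of_notMem hj] using orbitRel.refl _
  have hiterate (k : ℕ) : orbitRel fs (p i) (p ((advance B)^[k] i)) := by
    induction k with
    | zero => exact orbitRel.refl _
    | succ k ih => simpa only [Function.iterate_succ_apply'] using ih.trans (hadvance _)
  exact hiterate N

end Advance

section MidNotMem

variable {B : Set (ZMod N)}

lemma orbitRel_faceWalk_mid_succ {i : ZMod N} (hi : i ∈ B) :
    orbitRel {faceWalk (some '' B)} (i, .mid) (i + 1, .mid) := by
  have mid_inn := orbitRel_faceWalk (some '' B) (faceWalk_mid_of_notMem (i := i + 1) (by simp))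
  have inn_mid := orbitRel_faceWalk (some '' B)
    (faceWalk_inn_of_mem (i := i + 1) (by simpa using hi))
  rw [add_sub_cancel_right] at inn_mid
  exact (mid_inn.trans inn_mid).symm

lemma orbitRel_faceWalk_out_succ {i : ZMod N} (hi : i ∈ B) :
    orbitRel {faceWalk (some '' B)} (i, .out) (i + 1, .out) :=
  orbitRel_faceWalk _ (faceWalk_out_of_mem (Set.mem_image_of_mem some hi))

lemma orbitRel_faceWalk_inn_mid (i : ZMod N) :
    orbitRel {faceWalk (some '' B)} (i, .inn) (i, .mid) :=
  (orbitRel_faceWalk _ (faceWalk_mid_of_notMem (by simp))).symm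

lemma escape_faceWalk [NeZero N] (hB : B ≠ Set.univ) (x : Dart N) :
    escape B (faceWalk (some '' B) x).1 = escape B x.1 := by
  obtain ⟨i, _ | _ | _⟩ := x
  · by_cases hi : i ∈ B
    · rw [faceWalk_out_of_mem (by simpa using hi), escape_add_one_of_mem hB hi]
    · rw [faceWalk_out_of_notMem (by simpa using hi)]
  · rw [faceWalk_mid_of_notMem (by simp)]
  · by_cases hi : i - 1 ∈ B
    · have h := escape_add_one_of_mem hB hi
      rw [sub_add_cancel] at h
      rw [faceWalk_inn_of_mem (by simpa using hi), h]
    · rw [faceWalk_inn_of_notMem (by simpa using hi)]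

lemma orbitRel_escape_mid [NeZero N] (hB : B ≠ Set.univ) (x : Dart N) :
    orbitRel {faceWalk (some '' B)} x (escape B x.1, .mid) := by
  have hmid := orbitRel_escape (·, Side.mid) fun i (hi : i ∈ B) => orbitRel_faceWalk_mid_succ hi
  obtain ⟨i, _ | _ | _⟩ := x
  · have hout := orbitRel_escape (·, Side.out)
      (fun i (hi : i ∈ B) => orbitRel_faceWalk_out_succ hi) i
    have hescape : some (escape B i) ∉ some '' B := by simpa using escape_notMem hB i
    exact hout.trans (orbitRel_faceWalk _ (faceWalk_out_of_notMem hescape))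
  · exact hmid i
  · exact (orbitRel_faceWalk_inn_mid i).trans (hmid i)

lemma orbitCount_faceWalk_some_image [NeZero N] (hB : B ≠ Set.univ) :
    orbitCount {faceWalk (some '' B)} = Bᶜ.ncard :=
  orbitCount_eq_card_of_representatives (I := ↥Bᶜ)
    (g := fun x => ⟨escape B x.1, escape_notMem hB x.1⟩)
    (fun i => (i.1, .mid)) (fun i => Subtype.ext (escape_of_notMem i.2))
    (by rintro _ rfl x; exact Subtype.ext (escape_faceWalk hB x)) (orbitRel_escape_mid hB)

/-- Whether a dart is a side `out`; when all the hyperedges except `none` are dualised, these darts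
form one of two faces. -/
def isOut : Dart N → Bool
  | (_, .out) => true
  | _ => false

lemma orbitCount_faceWalk_some_image_univ :
    orbitCount {faceWalk (some '' (Set.univ : Set (ZMod N)))} = 2 := by
  refine (orbitCount_eq_card_of_representatives (g := isOut)
    (fun o => (0, if o then .out else .mid)) ?_ ?_ ?_).trans (by simp)
  · rintro (_ | _) <;> rfl
  · rintro _ rfl ⟨i, _ | _ | _⟩
    · rw [faceWalk_out_of_mem (by simp)]; rfl
    · rw [faceWalk_mid_of_notMem (by simp)]; rfl
    · rw [faceWalk_inn_of_mem (by simp)]; rfl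
  · have hmid (i : ZMod N) := orbitRel_of_forall_add_one (·, Side.mid)
      (fun j => orbitRel_faceWalk_mid_succ (Set.mem_univ j)) i 0
    rintro ⟨i, _ | _ | _⟩
    · exact orbitRel_of_forall_add_one (·, Side.out)
        (fun j => orbitRel_faceWalk_out_succ (Set.mem_univ j)) i 0
    · exact hmid i
    · exact (orbitRel_faceWalk_inn_mid i).trans (hmid i)

end MidNotMem

lemma exists_eq_some_image {α : Type*} {L : Set (Option α)} (hL : none ∉ L) :
    ∃ B : Set α, L = some '' B :=
  ⟨some ⁻¹' L, by ext (_ | i) <;> simp [hL]⟩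

section Genus

variable [NeZero N] {L : Set (Option (ZMod N))}

lemma ncard_add_ncard_compl_label (L : Set (Option (ZMod N))) : L.ncard + Lᶜ.ncard = N + 1 := by
  rw [Set.ncard_add_ncard_compl, Nat.card_eq_fintype_card, Fintype.card_option, ZMod.card]

lemma orbitCount_faceWalk_add_ncard (hL : none ∉ L) (hcard : L.ncard < N) :
    orbitCount {faceWalk L} + L.ncard = N := by
  obtain ⟨B, rfl⟩ := exists_eq_some_image hL
  rw [Set.ncard_image_of_injective _ (Option.some_injective _)] at hcard ⊢
  have hB : B ≠ Set.univ := by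
    rintro rfl
    simp at hcard
  rw [orbitCount_faceWalk_some_image hB, add_comm, Set.ncard_add_ncard_compl, Nat.card_zmod]

lemma orbitCount_faceWalk_eq_two (hL : none ∉ L) (hcard : L.ncard = N) :
    orbitCount {faceWalk L} = 2 := by
  obtain ⟨B, rfl⟩ := exists_eq_some_image hL
  rw [Set.ncard_image_of_injective _ (Option.some_injective _)] at hcard
  obtain rfl : B = Set.univ := by
    by_contra hB
    exact (Set.ncard_lt_card hB).ne (by rw [hcard, Nat.card_zmod])
  exact orbitCount_faceWalk_some_image_univ

lemma eulerGenus_of_ncard_lt (hL : none ∉ L) (hcard : L.ncard < N) :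
    ((hypermap N).pdual (⋃₀ (edge '' L))).eulerGenus = 2 * L.ncard := by
  have hcompl := orbitCount_faceWalk_of_none_mem (Set.mem_compl hL)
  have hface := orbitCount_faceWalk_add_ncard hL hcard
  have htotal := ncard_add_ncard_compl_label L
  rw [eulerGenus_pdual_hypermap]
  omega

lemma eulerGenus_of_ncard_eq (hL : none ∉ L) (hcard : L.ncard = N) :
    ((hypermap N).pdual (⋃₀ (edge '' L))).eulerGenus = 2 * (N + 1) - 4 := by
  have hcompl := orbitCount_faceWalk_of_none_mem (Set.mem_compl hL)
  have hface := orbitCount_faceWalk_eq_two hL hcard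
  have htotal := ncard_add_ncard_compl_label L
  rw [eulerGenus_pdual_hypermap]
  omega

lemma eulerGenus_of_two_le_ncard (hL : none ∈ L) (hcard : 2 ≤ L.ncard) :
    ((hypermap N).pdual (⋃₀ (edge '' L))).eulerGenus = 2 * (N + 1) - 2 * L.ncard := by
  have htotal := ncard_add_ncard_compl_label L
  rw [← eulerGenus_pdual_compl, ← sUnion_edge_image_compl,
    eulerGenus_of_ncard_lt (Set.notMem_compl_iff.2 hL) (by omega)]
  omega

lemma eulerGenus_of_ncard_eq_one (hL : none ∈ L) (hcard : L.ncard = 1) :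
    ((hypermap N).pdual (⋃₀ (edge '' L))).eulerGenus = 2 * (N + 1) - 4 := by
  have htotal := ncard_add_ncard_compl_label L
  rw [← eulerGenus_pdual_compl, ← sUnion_edge_image_compl,
    eulerGenus_of_ncard_eq (Set.notMem_compl_iff.2 hL) (by omega)]

end Genus

/-- The numbering of the hyperedges, in which the last one is `none`. -/
noncomputable def labelEquiv (N : ℕ) [NeZero N] : Fin (N + 1) ≃ Option (ZMod N) :=
  finSuccEquivLast.trans (ZMod.finEquiv N).toEquiv.optionCongr

lemma labelEquiv_last [NeZero N] : labelEquiv N (Fin.last N) = none := by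
  simp [labelEquiv]

end TriangleRing

open PreHypermap in
/-- For every `n ≥ 3` there is a connected hypermap `T` with hyperedges `e₁, …, e_n` such
that for all `A ⊆ E(T)`: if `e_n ∉ A` and `|A| ≤ n - 2` then `ε(T^A) = 2 |A|`; if
(`e_n ∈ A` and `|A| = 1`) or (`e_n ∉ A` and `|A| = n - 1`) then `ε(T^A) = 2n - 4`;
if `e_n ∈ A` and `2 ≤ |A| ≤ n` then `ε(T^A) = 2n - 2 |A|`. -/
theorem statement_17 (n : ℕ) (hn : 3 ≤ n) :
    ∃ (F : Type) (_ : Fintype F) (T : PreHypermap F) (e : Fin n → Set F),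
      T.IsHypermap ∧ T.Connected ∧
      Function.Injective e ∧ T.edges = Set.range e ∧
      ∀ A ⊆ T.edges,
        (e ⟨n - 1, by omega⟩ ∉ A → A.ncard ≤ n - 2 →
          (T.pdual (⋃₀ A)).eulerGenus = 2 * (A.ncard : ℤ)) ∧
        ((e ⟨n - 1, by omega⟩ ∈ A ∧ A.ncard = 1) ∨
            (e ⟨n - 1, by omega⟩ ∉ A ∧ A.ncard = n - 1) →
          (T.pdual (⋃₀ A)).eulerGenus = 2 * (n : ℤ) - 4) ∧
        (e ⟨n - 1, by omega⟩ ∈ A → 2 ≤ A.ncard → A.ncard ≤ n →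
          (T.pdual (⋃₀ A)).eulerGenus = 2 * (n : ℤ) - 2 * (A.ncard : ℤ)) := by
  obtain ⟨N, rfl⟩ : ∃ N, n = N + 1 := ⟨n - 1, by omega⟩
  have : NeZero N := ⟨by omega⟩
  refine ⟨_, inferInstance, TriangleRing.hypermap N,
    fun k => TriangleRing.edge (TriangleRing.labelEquiv N k), isHypermap_ofPerms _ _,
    TriangleRing.connected_hypermap,
    TriangleRing.edge_injective.comp (TriangleRing.labelEquiv N).injective, ?_, fun A hA => ?_⟩
  · rw [TriangleRing.edges_hypermap]
    exact ((TriangleRing.labelEquiv N).surjective.range_comp TriangleRing.edge).symm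
  rw [TriangleRing.edges_hypermap] at hA
  obtain ⟨L, rfl⟩ := Set.subset_range_iff_exists_image_eq.1 hA
  have hlast : TriangleRing.labelEquiv N ⟨N + 1 - 1, by omega⟩ = none :=
    TriangleRing.labelEquiv_last
  simp only [hlast, TriangleRing.edge_injective.mem_set_image, Nat.cast_succ,
    Set.ncard_image_of_injective _ TriangleRing.edge_injective]
  refine ⟨fun hL hcard => TriangleRing.eulerGenus_of_ncard_lt hL (by omega), ?_,
    fun hL hcard _ => TriangleRing.eulerGenus_of_two_le_ncard hL hcard⟩
  rintro (⟨hL, hcard⟩ | ⟨hL, hcard⟩)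
  · exact TriangleRing.eulerGenus_of_ncard_eq_one hL hcard
  · exact TriangleRing.eulerGenus_of_ncard_eq hL hcard
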